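/- Let A = γZ + λᵀU + ε_A where (Z,U) is centered Gaussian with Var(Z)=1, Var(U)=Iₜ, Cov(Z,U)=ξᵀ, ε_A is independent of (Z,U) with mean zero and positive variance, γ + ξᵀλ ≠ 0, and ε_A is not Gaussian. Then E(Z | A) is not almost surely a linear function of A; i.e., there is no constant c with E(Z | A) = cA a.s. -/

import Mathlib

open MeasureTheory ProbabilityTheory

/-!
Put `S = γZ + λᵀU` and let `φ` be the characteristic function of `A = S + ε_A`. Since `(Z, S)` is
Gaussian and `ε_A` is independent of it, Stein's identity gives
`E[Z exp(isA)] = (E Z + is Cov(Z, S)) φ(s)`. If `E[Z | A] = cA + d`, the left-hand side is also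
`c E[A exp(isA)] + d φ(s)`. For `c = 0` this forces `φ` to vanish off the origin, which is absurd.
For `c ≠ 0` the variable `A` is integrable, so `E[A exp(isA)] = -i φ'(s)` and the equality of the
two sides is the differential equation characterizing Gaussian characteristic functions. Hence `A`
is Gaussian, and dividing out the characteristic function of `S` shows that `ε_A` is Gaussian.
-/

open Complex (I)
open scoped Complex

section Covariance

variable {Ω : Type*} [MeasurableSpace Ω] {μ : Measure Ω} {X Y : Ω → ℝ}

lemma covariance_of_integral_eq_zero_left [IsProbabilityMeasure μ]
    (hX : MemLp X 2 μ) (hY : MemLp Y 2 μ) (hmean : ∫ ω, X ω ∂μ = 0) :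
    cov[X, Y; μ] = ∫ ω, X ω * Y ω ∂μ := by
  rw [covariance_eq_sub hX hY, hmean, zero_mul, sub_zero]
  rfl

lemma covariance_eq_zero_of_variance_eq_zero [IsFiniteMeasure μ] (hY : MemLp Y 2 μ)
    (hvar : Var[Y; μ] = 0) : cov[X, Y; μ] = 0 := by
  have hconst : Y =ᵐ[μ] fun _ ↦ μ[Y] := by
    rw [← evariance_eq_zero_iff hY.aemeasurable, ← hY.ofReal_variance_eq, hvar, ENNReal.ofReal_zero]
  refine integral_eq_zero_of_ae ?_
  filter_upwards [hconst] with ω hω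
  rw [hω, sub_self, mul_zero, Pi.zero_apply]

lemma exists_covariance_eq_mul_variance [IsFiniteMeasure μ] (hY : MemLp Y 2 μ) :
    ∃ β : ℝ, cov[X, Y; μ] = β * Var[Y; μ] := by
  rcases eq_or_ne Var[Y; μ] 0 with hvar | hvar
  · exact ⟨0, by rw [covariance_eq_zero_of_variance_eq_zero hY hvar, zero_mul]⟩
  · exact ⟨cov[X, Y; μ] / Var[Y; μ], (div_mul_cancel₀ _ hvar).symm⟩

lemma covariance_const_mul_add_sum_right {ι : Type*} [Fintype ι] [IsFiniteMeasure μ]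
    {Z : Ω → ℝ} {U : Ω → ι → ℝ} (hZ : MemLp Z 2 μ) (hU : ∀ i, MemLp (fun ω ↦ U ω i) 2 μ)
    (γ : ℝ) (lam : ι → ℝ) :
    cov[Z, fun ω ↦ γ * Z ω + ∑ i, lam i * U ω i; μ] =
      γ * Var[Z; μ] + ∑ i, cov[Z, fun ω ↦ U ω i; μ] * lam i := by
  have hsum : MemLp (fun ω ↦ ∑ i, lam i * U ω i) 2 μ :=
    memLp_finsetSum _ fun i _ ↦ (hU i).const_mul (lam i)
  have hadd := covariance_add_right hZ (hZ.const_mul γ) hsum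
  rw [Pi.add_def] at hadd
  rw [hadd, covariance_const_mul_right, covariance_self hZ.aemeasurable,
    covariance_fun_sum_right (fun i ↦ (hU i).const_mul _) hZ]
  exact congrArg _ (Finset.sum_congr rfl fun i _ ↦ by rw [covariance_const_mul_right, mul_comm])

end Covariance

section WeightedCharFun

variable {Ω : Type*} [MeasurableSpace Ω] {μ : Measure Ω} {X Y : Ω → ℝ}

/-- The function `s ↦ 𝔼[X exp(i s Y)]`, i.e. the characteristic function of `Y` under the signed
measure with density `X`. For `X = 1` it is the characteristic function of the law of `Y`. -/
noncomputable def weightedCharFun (X Y : Ω → ℝ) (μ : Measure Ω) (s : ℝ) : ℂ :=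
  ∫ ω, (X ω : ℂ) * cexp (s * Y ω * I) ∂μ

lemma norm_cexp_ofReal_mul_ofReal_mul_I (s y : ℝ) : ‖cexp (s * y * I)‖ = 1 := by
  rw [← Complex.ofReal_mul, Complex.norm_exp_ofReal_mul_I]

lemma charFun_map_apply_real (hY : AEMeasurable Y μ) (s : ℝ) :
    charFun (μ.map Y) s = ∫ ω, cexp (s * Y ω * I) ∂μ := by
  rw [charFun_apply_real, integral_map hY (by fun_prop)]

lemma integrable_mul_cexp (hX : Integrable X μ) (hY : AEMeasurable Y μ) (s : ℝ) :
    Integrable (fun ω ↦ (X ω : ℂ) * cexp (s * Y ω * I)) μ :=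
  hX.ofReal.mul_bdd (c := 1) (by fun_prop)
    (.of_forall fun ω ↦ (norm_cexp_ofReal_mul_ofReal_mul_I s (Y ω)).le)

lemma weightedCharFun_congr_ae {X' : Ω → ℝ} (h : X =ᵐ[μ] X') :
    weightedCharFun X Y μ = weightedCharFun X' Y μ := by
  ext s
  refine integral_congr_ae ?_
  filter_upwards [h] with ω hω using by rw [hω]

lemma weightedCharFun_const (hY : AEMeasurable Y μ) (d s : ℝ) :
    weightedCharFun (fun _ ↦ d) Y μ s = d * charFun (μ.map Y) s := by
  rw [weightedCharFun, integral_const_mul, charFun_map_apply_real hY]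

lemma weightedCharFun_add {X' : Ω → ℝ} (hX : Integrable X μ) (hX' : Integrable X' μ)
    (hY : AEMeasurable Y μ) (s : ℝ) :
    weightedCharFun (fun ω ↦ X ω + X' ω) Y μ s =
      weightedCharFun X Y μ s + weightedCharFun X' Y μ s := by
  simp only [weightedCharFun, Complex.ofReal_add, add_mul]
  exact integral_add (integrable_mul_cexp hX hY s) (integrable_mul_cexp hX' hY s)

lemma weightedCharFun_const_mul (c s : ℝ) :
    weightedCharFun (fun ω ↦ c * X ω) Y μ s = c * weightedCharFun X Y μ s := by
  simp only [weightedCharFun, Complex.ofReal_mul, mul_assoc]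
  exact integral_const_mul _ _

lemma hasDerivAt_charFun_map [IsFiniteMeasure μ] (hY : Integrable Y μ) (s : ℝ) :
    HasDerivAt (charFun (μ.map Y)) (I * weightedCharFun Y Y μ s) s := by
  have hY' : AEMeasurable Y μ := hY.aemeasurable
  have hid : MemLp id (1 : ℕ) (μ.map Y) := by
    rw [memLp_map_measure_iff (by fun_prop) hY']
    simpa [memLp_one_iff_integrable] using hY
  have hderiv : deriv (charFun (μ.map Y)) s = I * weightedCharFun Y Y μ s := by
    rw [← iteratedDeriv_one, iteratedDeriv_charFun hid, integral_map hY' (by fun_prop)]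
    simp only [pow_one, weightedCharFun]
  rw [← hderiv]
  exact ((contDiff_charFun hid).differentiable (by simp)).differentiableAt.hasDerivAt

lemma weightedCharFun_condExp [IsFiniteMeasure μ] (hX : Integrable X μ) (hY : Measurable Y) :
    weightedCharFun (μ[X | MeasurableSpace.comap Y inferInstance]) Y μ =
      weightedCharFun X Y μ := by
  ext s
  have hle : MeasurableSpace.comap Y inferInstance ≤ ‹MeasurableSpace Ω› := hY.comap_le
  have hexp : StronglyMeasurable[MeasurableSpace.comap Y inferInstance]
      fun ω ↦ cexp (s * Y ω * I) :=
    ((by fun_prop : Measurable fun y : ℝ ↦ cexp (s * y * I)).comp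
      (comap_measurable Y)).stronglyMeasurable
  have hpull := condExp_stronglyMeasurable_bilin_of_bound
    (ContinuousLinearMap.lsmul ℝ ℝ).flip hle hexp hX 1
    (.of_forall fun ω ↦ (norm_cexp_ofReal_mul_ofReal_mul_I s (Y ω)).le)
  calc weightedCharFun (μ[X | MeasurableSpace.comap Y inferInstance]) Y μ s
      = ∫ ω, (μ[fun ω ↦ (X ω : ℂ) * cexp (s * Y ω * I) |
          MeasurableSpace.comap Y inferInstance]) ω ∂μ := integral_congr_ae hpull.symm
    _ = weightedCharFun X Y μ s := integral_condExp hle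

lemma weightedCharFun_add_of_indepFun {ε : Ω → ℝ} (hX : AEMeasurable X μ) (hY : AEMeasurable Y μ)
    (hε : AEMeasurable ε μ) (hindep : IndepFun ε (fun ω ↦ (X ω, Y ω)) μ) (s : ℝ) :
    weightedCharFun X (fun ω ↦ Y ω + ε ω) μ s =
      weightedCharFun X Y μ s * charFun (μ.map ε) s := by
  have hprod : IndepFun (fun ω ↦ (X ω : ℂ) * cexp (s * Y ω * I)) (fun ω ↦ cexp (s * ε ω * I)) μ :=
    (hindep.comp (φ := fun x : ℝ ↦ cexp (s * x * I))
      (ψ := fun p : ℝ × ℝ ↦ (p.1 : ℂ) * cexp (s * p.2 * I)) (by fun_prop) (by fun_prop)).symm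
  rw [charFun_map_apply_real hε, weightedCharFun, weightedCharFun,
    ← hprod.integral_fun_mul_eq_mul_integral (by fun_prop) (by fun_prop)]
  refine integral_congr_ae (.of_forall fun ω ↦ ?_)
  simp only [Complex.ofReal_add, mul_add, add_mul, Complex.exp_add, mul_assoc]

lemma weightedCharFun_of_indepFun (hX : AEMeasurable X μ) (hY : AEMeasurable Y μ)
    (hindep : IndepFun X Y μ) (s : ℝ) :
    weightedCharFun X Y μ s = (∫ ω, X ω ∂μ : ℝ) * charFun (μ.map Y) s := by
  have hprod : IndepFun (fun ω ↦ (X ω : ℂ)) (fun ω ↦ cexp (s * Y ω * I)) μ :=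
    hindep.comp (φ := fun x : ℝ ↦ (x : ℂ)) (ψ := fun y : ℝ ↦ cexp (s * y * I))
      (by fun_prop) (by fun_prop)
  rw [charFun_map_apply_real hY, ← integral_complex_ofReal]
  exact hprod.integral_fun_mul_eq_mul_integral (by fun_prop) (by fun_prop)

end WeightedCharFun

section Gaussian

variable {Ω : Type*} [MeasurableSpace Ω] {μ : Measure Ω} {X Y : Ω → ℝ}

lemma hasDerivAt_quadratic_ofReal (a b : ℂ) (s : ℝ) :
    HasDerivAt (fun s : ℝ ↦ s * a - b * s ^ 2 / 2) (a - b * s) s := by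
  have hs : HasDerivAt (fun s : ℝ ↦ (s : ℂ)) 1 s := Complex.ofRealCLM.hasDerivAt
  refine ((hs.mul_const a).sub (((hs.pow 2).const_mul b).div_const 2)).congr_deriv ?_
  ring

lemma hasDerivAt_charFun_gaussianReal (m : ℝ) (v : NNReal) (s : ℝ) :
    HasDerivAt (charFun (gaussianReal m v))
      ((m * I - v * s) * charFun (gaussianReal m v) s) s := by
  have hexp := (hasDerivAt_quadratic_ofReal (m * I) v s).cexp
  simp only [← mul_assoc, ← charFun_gaussianReal] at hexp
  rwa [mul_comm] at hexp

lemma weightedCharFun_self_of_hasGaussianLaw (hY : HasGaussianLaw Y μ) (s : ℝ) :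
    weightedCharFun Y Y μ s =
      ((∫ ω, Y ω ∂μ : ℝ) + s * Var[Y; μ] * I) * charFun (μ.map Y) s := by
  have := hY.isProbabilityMeasure
  have hderiv := hasDerivAt_charFun_gaussianReal (∫ ω, Y ω ∂μ) Var[Y; μ].toNNReal s
  rw [← hY.map_eq_gaussianReal, Real.coe_toNNReal _ (variance_nonneg Y μ)] at hderiv
  have heq := (hasDerivAt_charFun_map hY.integrable s).unique hderiv
  linear_combination -I * heq +
    (weightedCharFun Y Y μ s - (∫ ω, Y ω ∂μ : ℝ) * charFun (μ.map Y) s) * Complex.I_sq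

lemma indepFun_sub_const_mul_of_hasGaussianLaw_prodMk
    (hXY : HasGaussianLaw (fun ω ↦ (X ω, Y ω)) μ) {β : ℝ} (hβ : cov[X, Y; μ] = β * Var[Y; μ]) :
    IndepFun (fun ω ↦ X ω - β * Y ω) Y μ := by
  have := hXY.isProbabilityMeasure
  have hX := hXY.fst
  have hY := hXY.snd
  have hpair : HasGaussianLaw (fun ω ↦ (X ω - β * Y ω, Y ω)) μ :=
    hXY.map_fun ((ContinuousLinearMap.fst ℝ ℝ ℝ - β • ContinuousLinearMap.snd ℝ ℝ ℝ).prod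
      (ContinuousLinearMap.snd ℝ ℝ ℝ))
  refine hpair.indepFun_of_covariance_eq_zero ?_
  rw [covariance_fun_sub_left hX.memLp_two (hY.memLp_two.const_mul β) hY.memLp_two,
    covariance_const_mul_left, covariance_self hY.aemeasurable, hβ, sub_self]

/-- Stein's identity for the test function `y ↦ exp(i s y)`. -/
lemma weightedCharFun_of_hasGaussianLaw_prodMk (hXY : HasGaussianLaw (fun ω ↦ (X ω, Y ω)) μ)
    (s : ℝ) :
    weightedCharFun X Y μ s =
      ((∫ ω, X ω ∂μ : ℝ) + s * cov[X, Y; μ] * I) * charFun (μ.map Y) s := by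
  have := hXY.isProbabilityMeasure
  have hX := hXY.fst
  have hY := hXY.snd
  obtain ⟨β, hβ⟩ := exists_covariance_eq_mul_variance (X := X) hY.memLp_two
  have hβY : Integrable (fun ω ↦ β * Y ω) μ := hY.integrable.const_mul β
  have hres : Integrable (fun ω ↦ X ω - β * Y ω) μ := hX.integrable.sub hβY
  have hindep := indepFun_sub_const_mul_of_hasGaussianLaw_prodMk hXY hβ
  calc weightedCharFun X Y μ s
      = weightedCharFun (fun ω ↦ X ω - β * Y ω + β * Y ω) Y μ s := by simp only [sub_add_cancel]
    _ = (∫ ω, X ω - β * Y ω ∂μ : ℝ) * charFun (μ.map Y) s +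
          β * (((∫ ω, Y ω ∂μ : ℝ) + s * Var[Y; μ] * I) * charFun (μ.map Y) s) := by
      rw [weightedCharFun_add hres hβY hY.aemeasurable, weightedCharFun_const_mul,
        weightedCharFun_of_indepFun hres.aemeasurable hY.aemeasurable hindep,
        weightedCharFun_self_of_hasGaussianLaw hY]
    _ = ((∫ ω, X ω ∂μ : ℝ) + s * cov[X, Y; μ] * I) * charFun (μ.map Y) s := by
      rw [integral_sub hX.integrable hβY, integral_const_mul, hβ]
      push_cast
      ring

lemma weightedCharFun_add_of_hasGaussianLaw_prodMk {ε : Ω → ℝ}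
    (hXY : HasGaussianLaw (fun ω ↦ (X ω, Y ω)) μ) (hε : AEMeasurable ε μ)
    (hindep : IndepFun ε (fun ω ↦ (X ω, Y ω)) μ) (s : ℝ) :
    weightedCharFun X (fun ω ↦ Y ω + ε ω) μ s =
      ((∫ ω, X ω ∂μ : ℝ) + s * cov[X, Y; μ] * I) * charFun (μ.map fun ω ↦ Y ω + ε ω) s := by
  have := hXY.isProbabilityMeasure
  have hX := hXY.fst.aemeasurable
  have hY := hXY.snd.aemeasurable
  have hYε : IndepFun Y ε μ := (hindep.comp measurable_id measurable_snd).symm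
  rw [weightedCharFun_add_of_indepFun hX hY hε hindep,
    weightedCharFun_of_hasGaussianLaw_prodMk hXY, hYε.charFun_map_fun_add_eq_mul hY hε,
    Pi.mul_apply, mul_assoc]

end Gaussian

section GaussianReal

lemma integral_eq_of_map_eq_gaussianReal {Ω : Type*} [MeasurableSpace Ω] {μ : Measure Ω}
    {X : Ω → ℝ} (hX : AEMeasurable X μ) {m : ℝ} {v : NNReal} (h : μ.map X = gaussianReal m v) :
    ∫ ω, X ω ∂μ = m := by
  rw [HasLaw.integral_eq ⟨hX, h⟩, integral_id_gaussianReal]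

lemma eq_mul_cexp_of_hasDerivAt {f g g' : ℝ → ℂ} (hg : ∀ s, HasDerivAt g (g' s) s)
    (hf : ∀ s, HasDerivAt f (g' s * f s) s) (s : ℝ) : f s = f 0 * cexp (g s - g 0) := by
  have hderiv : ∀ s, HasDerivAt (fun s ↦ f s * cexp (-g s)) 0 s := fun s ↦
    ((hf s).mul (hg s).neg.cexp).congr_deriv (by ring)
  have hconst : f s * cexp (-g s) = f 0 * cexp (-g 0) :=
    is_const_of_deriv_eq_zero (fun s ↦ (hderiv s).differentiableAt) (fun s ↦ (hderiv s).deriv) s 0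
  rw [sub_eq_neg_add, Complex.exp_add, ← mul_assoc, ← hconst, mul_assoc, ← Complex.exp_add,
    neg_add_cancel, Complex.exp_zero, mul_one]

lemma eq_gaussianReal_of_hasDerivAt_charFun {ν : Measure ℝ} [IsProbabilityMeasure ν] {m v : ℝ}
    (hν : ∀ s, HasDerivAt (charFun ν) ((m * I - v * s) * charFun ν s) s) :
    ν = gaussianReal m v.toNNReal := by
  have hφ (s : ℝ) : charFun ν s = cexp (s * m * I - v * s ^ 2 / 2) := by
    have := eq_mul_cexp_of_hasDerivAt (hasDerivAt_quadratic_ofReal (m * I) v) hν s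
    simpa [mul_assoc] using this
  have hv : 0 ≤ v := by
    have hnorm := norm_charFun_le_one (μ := ν) (1 : ℝ)
    rw [hφ, Complex.norm_exp, Real.exp_le_one_iff] at hnorm
    simp only [Complex.ofReal_one, one_mul, one_pow, mul_one, Complex.sub_re,
      Complex.re_ofReal_mul, Complex.I_re, mul_zero, Complex.div_ofNat_re, Complex.ofReal_re,
      zero_sub, Left.neg_nonpos_iff] at hnorm
    linarith
  refine Measure.ext_of_charFun (funext fun s ↦ ?_)
  rw [hφ, charFun_gaussianReal, Real.coe_toNNReal v hv]

end GaussianReal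

section AffineConditionalExpectation

variable {Ω : Type*} [MeasurableSpace Ω] {μ : Measure Ω} {X Y A ε : Ω → ℝ} {c d m δ : ℝ}

lemma ne_zero_of_condExp_ae_eq_affine [IsProbabilityMeasure μ] (hX : Integrable X μ)
    (hA : Measurable A) (hδ : δ ≠ 0)
    (hstein : ∀ s : ℝ, weightedCharFun X A μ s = (m + s * δ * I) * charFun (μ.map A) s)
    (hcond : μ[X | MeasurableSpace.comap A inferInstance] =ᵐ[μ] fun ω ↦ c * A ω + d) :
    c ≠ 0 := by
  rintro rfl
  have := Measure.isProbabilityMeasure_map (μ := μ) hA.aemeasurable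
  have hproj (s : ℝ) : (m + s * δ * I) * charFun (μ.map A) s = d * charFun (μ.map A) s := by
    rw [← hstein, ← weightedCharFun_condExp hX hA, weightedCharFun_congr_ae hcond]
    simpa only [zero_mul, zero_add] using weightedCharFun_const hA.aemeasurable d s
  have hmd : (m : ℂ) = d := by simpa [charFun_zero] using hproj 0
  have hvanish (s : ℝ) (hs : s ≠ 0) : charFun (μ.map A) s = 0 := by
    have : (s : ℂ) * δ * I * charFun (μ.map A) s = 0 := by
      linear_combination hproj s - charFun (μ.map A) s * hmd
    simpa [hs, hδ] using this
  have hzero : charFun (μ.map A) = 0 :=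
    Continuous.ext_on (dense_compl_singleton 0) continuous_charFun continuous_const hvanish
  simpa [charFun_zero] using congrFun hzero 0

lemma hasGaussianLaw_of_condExp_ae_eq_affine [IsProbabilityMeasure μ] (hX : Integrable X μ)
    (hA : Measurable A) (hδ : δ ≠ 0)
    (hstein : ∀ s : ℝ, weightedCharFun X A μ s = (m + s * δ * I) * charFun (μ.map A) s)
    (hcond : μ[X | MeasurableSpace.comap A inferInstance] =ᵐ[μ] fun ω ↦ c * A ω + d) :
    HasGaussianLaw A μ := by
  have := Measure.isProbabilityMeasure_map (μ := μ) hA.aemeasurable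
  have hc : c ≠ 0 := ne_zero_of_condExp_ae_eq_affine hX hA hδ hstein hcond
  have haffine : Integrable (fun ω ↦ c * A ω + d) μ := integrable_condExp.congr hcond
  have hcA : Integrable (fun ω ↦ c * A ω) μ := integrable_add_const_iff.1 haffine
  have hAint : Integrable A μ := (integrable_const_mul_iff hc.isUnit A).1 hcA
  have hproj (s : ℝ) : (m + s * δ * I) * charFun (μ.map A) s =
      c * weightedCharFun A A μ s + d * charFun (μ.map A) s := by
    rw [← hstein, ← weightedCharFun_condExp hX hA, weightedCharFun_congr_ae hcond,
      weightedCharFun_add hcA (integrable_const d) hA.aemeasurable, weightedCharFun_const_mul,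
      weightedCharFun_const hA.aemeasurable]
  have hode (s : ℝ) : HasDerivAt (charFun (μ.map A))
      ((((m - d) / c : ℝ) * I - (δ / c : ℝ) * s) * charFun (μ.map A) s) s := by
    refine (hasDerivAt_charFun_map hAint s).congr_deriv ?_
    have hc' : (c : ℂ) ≠ 0 := Complex.ofReal_ne_zero.2 hc
    push_cast
    field_simp
    linear_combination -I * hproj s + s * δ * charFun (μ.map A) s * Complex.I_sq
  exact HasLaw.hasGaussianLaw ⟨hA.aemeasurable, eq_gaussianReal_of_hasDerivAt_charFun hode⟩

theorem hasGaussianLaw_noise_of_condExp_ae_eq_affine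
    (hXY : HasGaussianLaw (fun ω ↦ (X ω, Y ω)) μ) (hcov : cov[X, Y; μ] ≠ 0)
    (hindep : IndepFun ε (fun ω ↦ (X ω, Y ω)) μ) (hA : Measurable fun ω ↦ Y ω + ε ω)
    (hcond : μ[X | MeasurableSpace.comap (fun ω ↦ Y ω + ε ω) inferInstance]
      =ᵐ[μ] fun ω ↦ c * (Y ω + ε ω) + d) :
    HasGaussianLaw ε μ := by
  have := hXY.isProbabilityMeasure
  have hsub : (fun ω ↦ Y ω + ε ω) - Y = ε := funext fun ω ↦ add_sub_cancel_left (Y ω) (ε ω)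
  have hε : AEMeasurable ε μ := hsub ▸ hA.aemeasurable.sub hXY.snd.aemeasurable
  have hAgauss : HasGaussianLaw (fun ω ↦ Y ω + ε ω) μ :=
    hasGaussianLaw_of_condExp_ae_eq_affine hXY.fst.integrable hA hcov
      (weightedCharFun_add_of_hasGaussianLaw_prodMk hXY hε hindep) hcond
  have hYε : IndepFun Y ε μ := (hindep.comp measurable_id measurable_snd).symm
  have hgauss := IndepFun.hasGaussianLaw_sub_of_sub hXY.snd hAgauss (hsub.symm ▸ hYε)
  rwa [hsub] at hgauss

end AffineConditionalExpectation

section LinearModel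

variable {Ω ι : Type*} [MeasurableSpace Ω] [Fintype ι] {μ : Measure Ω} {Z : Ω → ℝ} {U : Ω → ι → ℝ}

lemma hasGaussianLaw_prodMk_of_forall_map_eq_gaussianReal (hZ : AEMeasurable Z μ)
    (hU : AEMeasurable U μ)
    (h : ∀ (a : ℝ) (b : ι → ℝ), ∃ (m : ℝ) (v : NNReal),
      μ.map (fun ω ↦ a * Z ω + ∑ i, b i * U ω i) = gaussianReal m v) :
    HasGaussianLaw (fun ω ↦ (Z ω, U ω)) μ := by
  classical
  have hZU : AEMeasurable (fun ω ↦ (Z ω, U ω)) μ := hZ.prodMk hU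
  refine ⟨isGaussian_of_map_eq_gaussianReal fun L ↦ ?_⟩
  have hL (z : ℝ) (u : ι → ℝ) : L (z, u) = L (1, 0) * z + ∑ i, L (0, Pi.single i 1) * u i := by
    have hsplit : (z, u) = z • ((1, 0) : ℝ × (ι → ℝ)) + ∑ i, u i • (0, Pi.single i (1 : ℝ)) := by
      ext j
      · simp [Prod.fst_sum]
      · simp [Prod.snd_sum, Finset.sum_apply, Pi.single_apply]
    rw [hsplit, map_add, map_sum]
    simp only [map_smul, smul_eq_mul, mul_comm]
  obtain ⟨m, v, hmv⟩ := h (L (1, 0)) fun i ↦ L (0, Pi.single i 1)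
  refine ⟨m, v, ?_⟩
  rw [AEMeasurable.map_map_of_aemeasurable (by fun_prop) hZU, ← hmv]
  congr 1 with ω
  exact hL _ _

theorem stmt6_general (hZU : HasGaussianLaw (fun ω ↦ (Z ω, U ω)) μ) {εA : Ω → ℝ}
    (hindep : IndepFun εA (fun ω ↦ (Z ω, U ω)) μ) (hεnonGauss : ¬ HasGaussianLaw εA μ)
    {γ : ℝ} {lam : ι → ℝ} (hne : γ * Var[Z; μ] + ∑ i, cov[Z, fun ω ↦ U ω i; μ] * lam i ≠ 0)
    {A : Ω → ℝ} (hmA : Measurable A)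
    (hA : ∀ ω, A ω = γ * Z ω + (∑ i, lam i * U ω i) + εA ω) :
    ¬ ∃ c d : ℝ, μ[Z | MeasurableSpace.comap A inferInstance] =ᵐ[μ] fun ω ↦ c * A ω + d := by
  rintro ⟨c, d, hcond⟩
  have := hZU.isProbabilityMeasure
  obtain rfl : A = fun ω ↦ γ * Z ω + (∑ i, lam i * U ω i) + εA ω := funext hA
  have hpair : HasGaussianLaw (fun ω ↦ (Z ω, γ * Z ω + ∑ i, lam i * U ω i)) μ := by
    let S : ℝ × (ι → ℝ) →L[ℝ] ℝ := γ • ContinuousLinearMap.fst ℝ ℝ (ι → ℝ) +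
      (∑ i, lam i • ContinuousLinearMap.proj i) ∘L ContinuousLinearMap.snd ℝ ℝ (ι → ℝ)
    simpa [S] using hZU.map_fun ((ContinuousLinearMap.fst ℝ ℝ (ι → ℝ)).prod S)
  have hcov : cov[Z, fun ω ↦ γ * Z ω + ∑ i, lam i * U ω i; μ] ≠ 0 := by
    rwa [covariance_const_mul_add_sum_right hZU.fst.memLp_two fun i ↦ (hZU.snd.eval i).memLp_two]
  have hindep' : IndepFun εA (fun ω ↦ (Z ω, γ * Z ω + ∑ i, lam i * U ω i)) μ :=
    hindep.comp (ψ := fun p : ℝ × (ι → ℝ) ↦ (p.1, γ * p.1 + ∑ i, lam i * p.2 i))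
      measurable_id (by fun_prop)
  exact hεnonGauss (hasGaussianLaw_noise_of_condExp_ae_eq_affine hpair hcov hindep' hmA hcond)

end LinearModel

/-- With A = γZ + λᵀU + ε_A, (Z,U) centered Gaussian as stated,
ε_A independent of (Z,U) with mean zero, positive variance, non-Gaussian, and
γ + ξᵀλ ≠ 0, E(Z | A) is not a.s. a linear function of A. -/
theorem stmt6 {Ω : Type*} [MeasurableSpace Ω] (μ : Measure Ω) [IsProbabilityMeasure μ]
    {t : ℕ} (Z : Ω → ℝ) (U : Ω → Fin t → ℝ) (εA : Ω → ℝ)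
    (hmZ : Measurable Z) (hmU : Measurable U) (hmε : Measurable εA)
    (hGauss : ∀ (a : ℝ) (b : Fin t → ℝ), ∃ v : NNReal,
      Measure.map (fun ω => a * Z ω + ∑ i, b i * U ω i) μ = gaussianReal 0 v)
    (ξ : Fin t → ℝ)
    (hvarZ : ∫ ω, Z ω * Z ω ∂μ = 1)
    (hvarU : ∀ i j, ∫ ω, U ω i * U ω j ∂μ = if i = j then 1 else 0)
    (hcov : ∀ i, ∫ ω, Z ω * U ω i ∂μ = ξ i)
    (hindep : IndepFun εA (fun ω => (Z ω, U ω)) μ)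
    (hε0 : ∫ ω, εA ω ∂μ = 0) (hεvar : 0 < variance εA μ)
    (hεnonGauss : ¬ ∃ (m : ℝ) (v : NNReal), Measure.map εA μ = gaussianReal m v)
    (γ : ℝ) (lam : Fin t → ℝ)
    (hne : γ + ∑ i, ξ i * lam i ≠ 0)
    (A : Ω → ℝ) (hA : ∀ ω, A ω = γ * Z ω + (∑ i, lam i * U ω i) + εA ω) :
    ¬ ∃ c : ℝ, μ[Z | MeasurableSpace.comap A inferInstance]
        =ᵐ[μ] fun ω => c * A ω := by
  have hZU : HasGaussianLaw (fun ω ↦ (Z ω, U ω)) μ :=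
    hasGaussianLaw_prodMk_of_forall_map_eq_gaussianReal hmZ.aemeasurable hmU.aemeasurable
      fun a b ↦ ⟨0, hGauss a b⟩
  have hmeanZ : ∫ ω, Z ω ∂μ = 0 :=
    integral_eq_of_map_eq_gaussianReal hmZ.aemeasurable (by simpa using (hGauss 1 0).choose_spec)
  have hmA : Measurable A := by
    rw [funext hA]
    fun_prop
  rintro ⟨c, hc⟩
  refine stmt6_general hZU hindep (fun h ↦ hεnonGauss ⟨_, _, h.map_eq_gaussianReal⟩) ?_ hmA hA
    ⟨c, 0, by simpa only [add_zero] using hc⟩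
  have hZ := hZU.fst.memLp_two
  simpa only [← covariance_self hmZ.aemeasurable, covariance_of_integral_eq_zero_left hZ hZ hmeanZ,
    covariance_of_integral_eq_zero_left hZ (hZU.snd.eval _).memLp_two hmeanZ, hvarZ, hcov, mul_one]
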